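/- (No-broadcasting theorem) Two density matrices ρ and ρ' on a finite-dimensional Hilbert space H_S can be broadcast by one and the same quantum channel Λ: S → S₁S₂ (i.e., the marginals on S₁ and on S₂ of Λ[ρ] both equal ρ, and likewise for ρ') if and only if ρ and ρ' commute, [ρ, ρ'] = 0, i.e., if and only if they admit spectral decompositions with the same eigenvectors. -/

import Mathlib

open Matrix Kronecker ComplexOrder

section Defs
variable {α α' β β' γ : Type*} [Fintype α] [DecidableEq α] [Fintype α'] [DecidableEq α']
  [Fintype β] [DecidableEq β] [Fintype β'] [DecidableEq β'] [Fintype γ] [DecidableEq γ]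

/-- A density matrix: a positive semidefinite matrix with unit trace. -/
def IsDensityMatrix (ρ : Matrix β β ℂ) : Prop := ρ.PosSemidef ∧ ρ.trace = 1

/-- The map `id_α ⊗ Λ` induced on matrices over the product index type. -/
noncomputable def idTensor (Λ : Matrix β β ℂ →ₗ[ℂ] Matrix β' β' ℂ) :
    Matrix (α × β) (α × β) ℂ →ₗ[ℂ] Matrix (α × β') (α × β') ℂ where
  toFun M := Matrix.of fun p q => Λ (Matrix.of fun b b' => M (p.1, b) (q.1, b')) p.2 q.2
  map_add' M N := by
    ext p q
    show Λ (Matrix.of fun b b' => (M + N) (p.1, b) (q.1, b')) p.2 q.2 = _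
    have h : (Matrix.of fun b b' => (M + N) (p.1, b) (q.1, b')) =
        (Matrix.of fun b b' => M (p.1, b) (q.1, b')) +
          (Matrix.of fun b b' => N (p.1, b) (q.1, b')) := rfl
    rw [h, map_add]
    rfl
  map_smul' c M := by
    ext p q
    show Λ (Matrix.of fun b b' => (c • M) (p.1, b) (q.1, b')) p.2 q.2 = _
    have h : (Matrix.of fun b b' => (c • M) (p.1, b) (q.1, b')) =
        c • (Matrix.of fun b b' => M (p.1, b) (q.1, b')) := rfl
    rw [h, _root_.map_smul]
    rfl

/-- Complete positivity: all extensions `id ⊗ Λ` preserve positive semidefiniteness. -/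
def IsCompletelyPositive (Λ : Matrix β β ℂ →ₗ[ℂ] Matrix β' β' ℂ) : Prop :=
  ∀ (k : ℕ) (M : Matrix (Fin k × β) (Fin k × β) ℂ), M.PosSemidef → (idTensor Λ M).PosSemidef

/-- A quantum channel: a completely positive trace-preserving linear map. -/
def IsQuantumChannel (Λ : Matrix β β ℂ →ₗ[ℂ] Matrix β' β' ℂ) : Prop :=
  IsCompletelyPositive Λ ∧ ∀ X, (Λ X).trace = X.trace

/-- Partial trace over the second tensor factor. -/
noncomputable def ptraceRight (M : Matrix (α × β) (α × β) ℂ) : Matrix α α ℂ :=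
  Matrix.of fun a a' => ∑ b, M (a, b) (a', b)

/-- Partial trace over the first tensor factor. -/
noncomputable def ptraceLeft (M : Matrix (α × β) (α × β) ℂ) : Matrix β β ℂ :=
  Matrix.of fun b b' => ∑ a, M (a, b) (a, b')

end Defs

section Helpers
variable {n : Type*} [Fintype n] [DecidableEq n]

open scoped MatrixOrder in
lemma exists_factor {σ : Matrix n n ℂ} (h : σ.PosSemidef) : ∃ B : Matrix n n ℂ, σ = Bᴴ * B :=
  CStarAlgebra.nonneg_iff_eq_star_mul_self.mp h.nonneg

lemma exists_kraus {m : Type*} [Fintype m] [DecidableEq m]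
    (Λ : Matrix n n ℂ →ₗ[ℂ] Matrix m m ℂ) (h : IsCompletelyPositive Λ) :
    ∃ K : (Fin (Fintype.card n) × m) → Matrix m n ℂ, ∀ X, Λ X = ∑ k, K k * X * (K k)ᴴ := by
  classical
  let e := Fintype.equivFin n
  let v : Fin (Fintype.card n) × n → ℂ := fun p => if e.symm p.1 = p.2 then 1 else 0
  have h1 := h _ (vecMulVec v (star v)) (posSemidef_vecMulVec_self_star v)
  obtain ⟨B, hB⟩ := exists_factor h1
  refine ⟨fun k => Matrix.of fun x i => star (B k (e i, x)), fun X => ?_⟩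
  have key : ∀ i j x y, Λ (Matrix.single i j 1) x y =
      ∑ k, star (B k (e i, x)) * B k (e j, y) := by
    intro i j x y
    have h2 := congrFun (congrFun hB (e i, x)) (e j, y)
    have h3 : (Matrix.of fun b b' => vecMulVec v (star v) (e i, b) (e j, b')) =
        Matrix.single i j (1 : ℂ) := by
      ext b b'
      simp only [vecMulVec, v, Matrix.of_apply, Matrix.single, Pi.star_apply,
        Equiv.symm_apply_apply]
      by_cases h : i = b <;> by_cases h' : j = b' <;> simp [h, h']
    simp only [idTensor, LinearMap.coe_mk, AddHom.coe_mk, Matrix.of_apply] at h2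
    rw [h3] at h2
    rw [h2, Matrix.mul_apply]
    rfl
  ext x y
  conv_lhs => rw [Matrix.matrix_eq_sum_single X]
  have h4 : ∀ i j, Matrix.single i j (X i j) = X i j • Matrix.single i j (1:ℂ) := by
    intro i j; simp
  simp only [h4, map_sum, _root_.map_smul, Matrix.sum_apply, Matrix.smul_apply, key]
  simp only [Matrix.mul_apply, Matrix.conjTranspose_apply, Matrix.of_apply, star_star,
    smul_eq_mul, Finset.mul_sum, Finset.sum_mul]
  rw [Finset.sum_comm]
  conv_rhs => rw [Finset.sum_comm]
  refine Finset.sum_congr rfl fun i _ => ?_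
  rw [Finset.sum_comm]
  refine Finset.sum_congr rfl fun j _ => Finset.sum_congr rfl fun k _ => ?_
  ring

lemma mul_eq_zero_of_trace {m : Type*} [Fintype m] [DecidableEq m] {σ : Matrix n n ℂ}
    (hσ : σ.PosSemidef) (M : Matrix m n ℂ) (h : (M * σ * Mᴴ).trace = 0) : M * σ = 0 := by
  obtain ⟨B, rfl⟩ := exists_factor hσ
  have h1 : M * Bᴴ * (M * Bᴴ)ᴴ = M * (Bᴴ * B) * Mᴴ := by
    simp [Matrix.mul_assoc]
  rw [← h1, trace_mul_conjTranspose_self_eq_zero_iff] at h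
  rw [← Matrix.mul_assoc, h, Matrix.zero_mul]

lemma eq_zero_of_trace {M : Matrix n n ℂ} (h : (M * Mᴴ).trace = 0) : M = 0 :=
  trace_mul_conjTranspose_self_eq_zero_iff.mp h

lemma fix_lemma {m κ : Type*} [Fintype m] [DecidableEq m] [Fintype κ]
    (Λ : Matrix n n ℂ →ₗ[ℂ] Matrix m m ℂ) (K : κ → Matrix m n ℂ)
    (hK : ∀ X, Λ X = ∑ k, K k * X * (K k)ᴴ) (hT : ∀ X, (Λ X).trace = X.trace)
    {σ : Matrix n n ℂ} (hσ : σ.PosSemidef) (A : Matrix n n ℂ) (B : Matrix m m ℂ)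
    (h1 : (Bᴴ * B * Λ σ).trace = (Aᴴ * A * σ).trace)
    (h2 : (Bᴴ * Λ (A * σ)).trace = (Aᴴ * A * σ).trace) :
    ∀ k, B * K k * σ = K k * A * σ := by
  have hs : σᴴ = σ := hσ.1
  have h3 : (B * Λ (σ * Aᴴ)).trace = (Aᴴ * A * σ).trace := by
    have e1 : (Λ (A * σ))ᴴ = Λ (σ * Aᴴ) := by
      simp [hK, conjTranspose_sum, Matrix.mul_assoc, hs]
    have := congrArg star h2
    rw [← trace_conjTranspose, ← trace_conjTranspose, conjTranspose_mul, e1] at this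
    simp only [conjTranspose_mul, conjTranspose_conjTranspose, hs] at this
    rw [trace_mul_comm, this, trace_mul_comm]
  have h4 : (Λ (A * σ * Aᴴ)).trace = (Aᴴ * A * σ).trace := by
    rw [hT, Matrix.trace_mul_comm, Matrix.mul_assoc]
  have tot : ∑ k, ((B * K k - K k * A) * σ * (B * K k - K k * A)ᴴ).trace = 0 := by
    have e : ∀ k, ((B * K k - K k * A) * σ * (B * K k - K k * A)ᴴ).trace =
        (Bᴴ * B * (K k * σ * (K k)ᴴ)).trace - (Bᴴ * (K k * (A * σ) * (K k)ᴴ)).trace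
        - (B * (K k * (σ * Aᴴ) * (K k)ᴴ)).trace + (K k * (A * σ * Aᴴ) * (K k)ᴴ).trace := by
      intro k
      rw [Matrix.mul_assoc Bᴴ, trace_mul_comm Bᴴ, trace_mul_comm Bᴴ]
      simp only [conjTranspose_sub, conjTranspose_mul, Matrix.sub_mul, Matrix.mul_sub,
        trace_sub, Matrix.mul_assoc]
      ring
    simp only [e, Finset.sum_add_distrib, Finset.sum_sub_distrib]
    simp only [← trace_sum, ← Matrix.mul_sum, ← hK]
    rw [h1, h2, h3, h4]; ring
  have nn : ∀ k ∈ Finset.univ,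
      0 ≤ ((B * K k - K k * A) * σ * (B * K k - K k * A)ᴴ).trace := fun k _ =>
    (hσ.mul_mul_conjTranspose_same _).trace_nonneg
  intro k
  have := mul_eq_zero_of_trace hσ _ ((Finset.sum_eq_zero_iff_of_nonneg nn).mp tot k (Finset.mem_univ k))
  rwa [Matrix.sub_mul, sub_eq_zero] at this

lemma exists_pinv {σ : Matrix n n ℂ} (hσ : σ.PosSemidef) :
    ∃ G : Matrix n n ℂ, Gᴴ = G ∧ G * σ = σ * G ∧ σ * G * σ = σ ∧ G * σ * G = G := by
  have h := hσ.1.spectral_theorem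
  set U := hσ.1.eigenvectorUnitary
  set d : n → ℂ := (RCLike.ofReal ∘ hσ.1.eigenvalues)
  have hd : ∀ i, star (d i) = d i := fun i => by simp [d]
  have hU : (star (U : Matrix n n ℂ)) * (U : Matrix n n ℂ) = 1 := by simp
  have hm : ∀ f g : n → ℂ, ((U : Matrix n n ℂ) * diagonal f * star (U : Matrix n n ℂ)) *
      ((U : Matrix n n ℂ) * diagonal g * star (U : Matrix n n ℂ)) =
      (U : Matrix n n ℂ) * diagonal (fun i => f i * g i) * star (U : Matrix n n ℂ) := by
    intro f g
    rw [← diagonal_mul_diagonal]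
    calc _ = (U : Matrix n n ℂ) * diagonal f * (star (U : Matrix n n ℂ) * (U : Matrix n n ℂ)) * diagonal g * star (U : Matrix n n ℂ) := by
          simp only [Matrix.mul_assoc]
      _ = _ := by rw [hU]; simp only [Matrix.mul_assoc, Matrix.one_mul]
  have h' : σ = (U : Matrix n n ℂ) * diagonal d * star (U : Matrix n n ℂ) := h
  refine ⟨(U : Matrix n n ℂ) * diagonal (fun i => (d i)⁻¹) * star (U : Matrix n n ℂ), ?_, ?_, ?_, ?_⟩
  · simp only [star_eq_conjTranspose, conjTranspose_mul, conjTranspose_conjTranspose,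
      diagonal_conjTranspose, Matrix.mul_assoc]
    congr 3
    ext i
    simp [d]
  · rw [h', hm, hm]; simp only [mul_comm]
  · rw [h', hm, hm]; simp only [mul_inv_mul_cancel]
  · rw [h', hm, hm]; 
    congr 3
    ext i
    by_cases h0 : d i = 0
    · simp [h0]
    · simp [h0]

lemma trace_ptraceRight (A : Matrix n n ℂ) (M : Matrix (n × n) (n × n) ℂ) :
    ((A ⊗ₖ (1 : Matrix n n ℂ)) * M).trace = (A * ptraceRight M).trace := by
  simp only [Matrix.trace, Matrix.diag, Matrix.mul_apply, kroneckerMap_apply, ptraceRight,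
    Fintype.sum_prod_type, Matrix.one_apply, Matrix.of_apply, mul_ite, mul_one, mul_zero,
    ite_mul, zero_mul, Finset.sum_ite_eq, Finset.mem_univ, if_true, Finset.mul_sum]
  refine Finset.sum_congr rfl fun i _ => ?_
  rw [Finset.sum_comm]

lemma trace_ptraceLeft (A : Matrix n n ℂ) (M : Matrix (n × n) (n × n) ℂ) :
    (((1 : Matrix n n ℂ) ⊗ₖ A) * M).trace = (A * ptraceLeft M).trace := by
  simp only [Matrix.trace, Matrix.diag, Matrix.mul_apply, kroneckerMap_apply, ptraceLeft,
    Fintype.sum_prod_type, Matrix.one_apply, Matrix.of_apply, one_mul,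
    ite_mul, zero_mul, Finset.mul_sum]
  rw [Finset.sum_comm]
  refine Finset.sum_congr rfl fun i _ => ?_
  conv_rhs => rw [Finset.sum_comm]
  refine Finset.sum_congr rfl fun j _ => ?_
  rw [Finset.sum_comm]
  simp

end Helpers

section Helpers2
variable {n : Type*} [Fintype n] [DecidableEq n]

lemma exists_simdiag {ρ ρ' : Matrix n n ℂ} (h : ρ.IsHermitian) (h' : ρ'.IsHermitian)
    (hc : ρ * ρ' = ρ' * ρ) :
    ∃ (U : Matrix n n ℂ) (d d' : n → ℂ), Uᴴ * U = 1 ∧ U * Uᴴ = 1 ∧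
      ρ = U * diagonal d * Uᴴ ∧ ρ' = U * diagonal d' * Uᴴ := by
  classical
  let A := toEuclideanLin ρ
  let B := toEuclideanLin ρ'
  have hA : A.IsSymmetric := isSymmetric_toEuclideanLin_iff.mpr h
  have hB : B.IsSymmetric := isSymmetric_toEuclideanLin_iff.mpr h'
  have hAB : Commute A B := by
    show A * B = B * A
    ext v i
    simp only [A, B, Module.End.mul_apply, toEuclideanLin]
    simp [Matrix.toLpLin_apply, Matrix.mulVec_mulVec, hc]
  have hI := LinearMap.IsSymmetric.directSum_isInternal_of_commute hA hB hAB
  have hO := LinearMap.IsSymmetric.orthogonalFamily_eigenspace_inf_eigenspace hA hB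
  have := hI.submodule_iSupIndep.fintypeNeBotOfFiniteDimensional
  have hI' := DirectSum.isInternal_ne_bot_iff.mpr hI
  have hO' := hO.comp (Subtype.val_injective (p := fun i : ℂ × ℂ =>
    (Module.End.eigenspace A i.2 ⊓ Module.End.eigenspace B i.1) ≠ ⊥))
  have hn : Module.finrank ℂ (EuclideanSpace ℂ n) = Fintype.card n := by simp
  let b := (hI'.subordinateOrthonormalBasis hn hO').reindex (Fintype.equivFin n).symm
  have hb : ∀ i, ∃ c : ℂ × ℂ, A (b i) = c.2 • b i ∧ B (b i) = c.1 • b i := by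
    intro i
    have := hI'.subordinateOrthonormalBasis_subordinate hn (Fintype.equivFin n i) hO'
    refine ⟨(hI'.subordinateOrthonormalBasisIndex hn (Fintype.equivFin n i) hO').1, ?_⟩
    have h1 : b i = hI'.subordinateOrthonormalBasis hn hO' (Fintype.equivFin n i) := by
      simp [b]
    rw [h1]
    exact ⟨Module.End.mem_eigenspace_iff.mp this.1, Module.End.mem_eigenspace_iff.mp this.2⟩
  choose c hc1 hc2 using hb
  let U : Matrix n n ℂ := Matrix.of fun i j => b j i
  have hU : Uᴴ * U = 1 := by
    ext i j
    have := b.inner_eq_ite i j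
    rw [Matrix.one_apply, ← this, Matrix.mul_apply, PiLp.inner_apply]
    simp [U, mul_comm]
  have hU' : U * Uᴴ = 1 := mul_eq_one_comm.mp hU
  have key : ∀ (R : Matrix n n ℂ) (d : n → ℂ), (∀ i, toEuclideanLin R (b i) = d i • b i) →
      R = U * diagonal d * Uᴴ := by
    intro R d hR
    have : R * U = U * diagonal d := by
      ext i j
      have := congrArg (fun v : EuclideanSpace ℂ n => v i) (hR j)
      rw [Matrix.mul_diagonal]
      simp only [toEuclideanLin, Matrix.toLpLin_apply, PiLp.smul_apply, smul_eq_mul] at this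
      simpa [U, Matrix.mul_apply, Matrix.mulVec, dotProduct, mul_comm] using this
    rw [← this, Matrix.mul_assoc, hU', Matrix.mul_one]
  exact ⟨U, _, _, hU, hU', key ρ _ hc1, key ρ' _ hc2⟩

lemma conj_isCompletelyPositive {m : Type*} [Fintype m] [DecidableEq m] (W : Matrix m n ℂ)
    (Λ : Matrix n n ℂ →ₗ[ℂ] Matrix m m ℂ) (hΛ : ∀ X, Λ X = W * X * Wᴴ) :
    IsCompletelyPositive Λ := by
  intro k M hM
  have : idTensor Λ M = ((1 : Matrix (Fin k) (Fin k) ℂ) ⊗ₖ W) * M *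
      ((1 : Matrix (Fin k) (Fin k) ℂ) ⊗ₖ W)ᴴ := by
    ext ⟨i, x⟩ ⟨j, y⟩
    simp only [idTensor, LinearMap.coe_mk, AddHom.coe_mk, Matrix.of_apply, hΛ, Matrix.mul_apply,
      Matrix.conjTranspose_apply, kroneckerMap_apply, Fintype.sum_prod_type, Matrix.one_apply]
    simp only [ite_mul, one_mul, zero_mul, Finset.sum_ite_irrel, Finset.sum_const_zero,
      Finset.sum_ite_eq, Finset.mem_univ, if_true, apply_ite star, star_zero, mul_ite, mul_zero]
  rw [this]
  exact hM.mul_mul_conjTranspose_same _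

/-- the copying isometry in the basis `U` -/
def copyIso (U : Matrix n n ℂ) : Matrix (n × n) n ℂ :=
  Matrix.of fun p i => U p.1 i * U p.2 i

lemma copy_sum {U : Matrix n n ℂ} (hU : Uᴴ * U = 1) (i j : n) :
    ∑ a, U a i * star (U a j) = if i = j then 1 else 0 := by
  have := congrFun (congrFun hU j) i
  rw [Matrix.one_apply, Matrix.mul_apply] at this
  simp only [eq_comm (a := i)]
  rw [← this]
  exact Finset.sum_congr rfl fun a _ => by rw [Matrix.conjTranspose_apply, mul_comm]

lemma copy_apply (U : Matrix n n ℂ) (d : n → ℂ) (p q : n × n) :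
    (copyIso U * diagonal d * (copyIso U)ᴴ) p q =
      ∑ i, d i * (U p.1 i * star (U q.1 i)) * (U p.2 i * star (U q.2 i)) := by
  rw [Matrix.mul_apply]
  refine Finset.sum_congr rfl fun i _ => ?_
  simp only [Matrix.mul_diagonal, copyIso, Matrix.of_apply, Matrix.conjTranspose_apply, star_mul']
  ring

lemma diag_apply' (U : Matrix n n ℂ) (d : n → ℂ) (p q : n) :
    (U * diagonal d * Uᴴ) p q = ∑ i, d i * (U p i * star (U q i)) := by
  rw [Matrix.mul_apply]
  refine Finset.sum_congr rfl fun i _ => ?_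
  simp only [Matrix.mul_diagonal, Matrix.conjTranspose_apply]
  ring

lemma copy_right {U : Matrix n n ℂ} (hU : Uᴴ * U = 1) (d : n → ℂ) :
    ptraceRight (copyIso U * diagonal d * (copyIso U)ᴴ) = U * diagonal d * Uᴴ := by
  ext p q
  simp only [ptraceRight, Matrix.of_apply, copy_apply, diag_apply']
  rw [Finset.sum_comm]
  refine Finset.sum_congr rfl fun i _ => ?_
  rw [← Finset.mul_sum, copy_sum hU, if_pos rfl, mul_one]

lemma copy_left {U : Matrix n n ℂ} (hU : Uᴴ * U = 1) (d : n → ℂ) :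
    ptraceLeft (copyIso U * diagonal d * (copyIso U)ᴴ) = U * diagonal d * Uᴴ := by
  ext p q
  simp only [ptraceLeft, Matrix.of_apply, copy_apply, diag_apply']
  rw [Finset.sum_comm]
  refine Finset.sum_congr rfl fun i _ => ?_
  rw [← Finset.sum_mul, ← Finset.mul_sum, copy_sum hU, if_pos rfl, mul_one]

lemma copy_iso {U : Matrix n n ℂ} (hU : Uᴴ * U = 1) : (copyIso U)ᴴ * copyIso U = 1 := by
  ext i j
  have h : ∀ p : n × n, (copyIso U)ᴴ i p * copyIso U p j =
      (U p.1 j * star (U p.1 i)) * (U p.2 j * star (U p.2 i)) := by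
    intro p
    simp only [copyIso, Matrix.of_apply, Matrix.conjTranspose_apply, star_mul']
    ring
  simp only [Matrix.mul_apply, h, Fintype.sum_prod_type, ← Finset.mul_sum, ← Finset.sum_mul,
    copy_sum hU, Matrix.one_apply]
  simp [eq_comm]

lemma broadcast_of_commute {ρ ρ' : Matrix n n ℂ} (h : ρ.IsHermitian) (h' : ρ'.IsHermitian)
    (hc : ρ * ρ' = ρ' * ρ) :
    ∃ Λ : Matrix n n ℂ →ₗ[ℂ] Matrix (n × n) (n × n) ℂ, IsQuantumChannel Λ ∧
        ptraceRight (Λ ρ) = ρ ∧ ptraceLeft (Λ ρ) = ρ ∧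
        ptraceRight (Λ ρ') = ρ' ∧ ptraceLeft (Λ ρ') = ρ' := by
  obtain ⟨U, d, d', hU, hU', rfl, rfl⟩ := exists_simdiag h h' hc
  let W := copyIso U * Uᴴ
  let Λ : Matrix n n ℂ →ₗ[ℂ] Matrix (n × n) (n × n) ℂ :=
    { toFun := fun X => W * X * Wᴴ
      map_add' := fun X Y => by rw [Matrix.mul_add, Matrix.add_mul]
      map_smul' := fun c X => by simp }
  have hΛ : ∀ X, Λ X = W * X * Wᴴ := fun _ => rfl
  have hd : ∀ d, Λ (U * diagonal d * Uᴴ) = copyIso U * diagonal d * (copyIso U)ᴴ := by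
    intro d
    calc _ = copyIso U * (Uᴴ * U) * diagonal d * (Uᴴ * U) * (copyIso U)ᴴ := by
          simp only [hΛ, W, conjTranspose_mul, conjTranspose_conjTranspose, Matrix.mul_assoc]
      _ = _ := by simp only [hU, Matrix.mul_one]
  refine ⟨Λ, ⟨conj_isCompletelyPositive W Λ hΛ, fun X => ?_⟩, ?_⟩
  · rw [hΛ, trace_mul_comm, ← Matrix.mul_assoc]
    have : Wᴴ * W = 1 := by
      calc _ = U * ((copyIso U)ᴴ * copyIso U) * Uᴴ := by
            simp only [W, conjTranspose_mul, conjTranspose_conjTranspose, Matrix.mul_assoc]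
        _ = 1 := by rw [copy_iso hU, Matrix.mul_one, hU']
    rw [this, Matrix.one_mul]
  · simp only [hd, copy_right hU, copy_left hU, and_self]

end Helpers2

section Helpers3
variable {n : Type*} [Fintype n] [DecidableEq n]

/-- If the pair `(σ, ρ)` is preserved by the marginal seen through `B`, the Kraus operators
intertwine `A` and `B`, together with their adjoints. -/
lemma intertwine {m κ : Type*} [Fintype m] [DecidableEq m] [Fintype κ]
    (Λ : Matrix n n ℂ →ₗ[ℂ] Matrix m m ℂ) (K : κ → Matrix m n ℂ)
    (hK : ∀ X, Λ X = ∑ k, K k * X * (K k)ᴴ) (hT : ∀ X, (Λ X).trace = X.trace)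
    {σ ρ A Z : Matrix n n ℂ} (hσ : σ.PosSemidef) (B : Matrix m m ℂ)
    (hA : A * σ = ρ) (hZ : Aᴴ = σ * Z)
    (h1 : (Bᴴ * B * Λ σ).trace = (Aᴴ * A * σ).trace)
    (h2 : (Bᴴ * Λ ρ).trace = (Aᴴ * ρ).trace)
    (h3 : (B * Bᴴ * Λ σ).trace = (A * Aᴴ * σ).trace) :
    (∀ k, B * K k * σ = K k * A * σ) ∧ (∀ k, Bᴴ * K k * σ = K k * Aᴴ * σ) := by
  have f1 : ∀ k, B * K k * σ = K k * A * σ :=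
    fix_lemma Λ K hK hT hσ A B h1 (by rw [hA, h2, ← hA, Matrix.mul_assoc])
  refine ⟨f1, fix_lemma Λ K hK hT hσ Aᴴ Bᴴ (by simpa using h3) ?_⟩
  simp only [conjTranspose_conjTranspose]
  rw [← hT (A * Aᴴ * σ), hK, hK, Matrix.mul_sum]
  congr 1
  refine Finset.sum_congr rfl fun k _ => ?_
  rw [hZ]
  calc _ = B * K k * σ * (Z * σ * (K k)ᴴ) := by simp only [Matrix.mul_assoc]
    _ = _ := by rw [f1]; simp only [Matrix.mul_assoc]

lemma commute_of_normal {σ ρ A G : Matrix n n ℂ} (hσ : σ.PosSemidef) (hρ : ρᴴ = ρ)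
    (hA : A * σ = ρ) (hN : A * Aᴴ * σ = Aᴴ * A * σ)
    (hG : G * σ = σ * G) (hG1 : σ * G * σ = σ) (hG2 : σ * G * ρ = ρ) : σ * ρ = ρ * σ := by
  have hs : σᴴ = σ := hσ.1
  have hA' : σ * Aᴴ = ρ := by
    rw [← hρ, ← hA, conjTranspose_mul, hs]
  have t1 : (σ * A * Aᴴ * σ).trace = (ρ * ρ).trace := by
    rw [Matrix.mul_assoc σ, Matrix.mul_assoc σ, hN, ← Matrix.mul_assoc, ← Matrix.mul_assoc, hA',
      Matrix.mul_assoc, hA]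
  have hM : Aᴴ * σ - σ * A = 0 := by
    apply eq_zero_of_trace
    have t2 : (Aᴴ * σ * (σ * A)).trace = (ρ * ρ).trace := by
      rw [← t1, trace_mul_comm]; simp only [Matrix.mul_assoc]
    have t3 : (Aᴴ * σ * (Aᴴ * σ)).trace = (ρ * ρ).trace := by
      nth_rewrite 1 [← hA']
      rw [← hA', Matrix.mul_assoc, trace_mul_comm]; simp only [Matrix.mul_assoc]
    have t4 : (σ * A * (σ * A)).trace = (ρ * ρ).trace := by
      rw [← hA, Matrix.mul_assoc, trace_mul_comm]; simp only [Matrix.mul_assoc]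
    have t5 : (σ * A * (Aᴴ * σ)).trace = (ρ * ρ).trace := by
      rw [← t1]; simp only [Matrix.mul_assoc]
    simp only [conjTranspose_sub, conjTranspose_mul, conjTranspose_conjTranspose, hs,
      Matrix.sub_mul, Matrix.mul_sub, trace_sub, t2, t3, t4, t5]
    ring
  have h2 : σ * σ * ρ = ρ * σ * σ := by
    rw [sub_eq_zero] at hM
    calc σ * σ * ρ = σ * (σ * A) * σ := by rw [← hA]; simp only [Matrix.mul_assoc]
      _ = (σ * Aᴴ) * σ * σ := by rw [← hM]; simp only [Matrix.mul_assoc]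
      _ = _ := by rw [hA']
  set C := σ * ρ - ρ * σ with hC
  have hCs : Cᴴ = - C := by
    simp only [hC, conjTranspose_sub, conjTranspose_mul, hs, hρ]; abel
  have hac : σ * C = - (C * σ) := by
    rw [eq_neg_iff_add_eq_zero, hC]
    simp only [Matrix.mul_sub, Matrix.sub_mul, ← Matrix.mul_assoc, h2]; abel
  have hz : (C * σ * Cᴴ).trace = 0 := by
    have p : (C * σ * C).trace = - (C * σ * C).trace := by
      conv_lhs => rw [Matrix.mul_assoc, hac, Matrix.mul_neg, trace_neg, trace_mul_comm]
    rw [hCs, Matrix.mul_neg, trace_neg]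
    linear_combination -p / 2
  have hz' := mul_eq_zero_of_trace hσ _ hz
  have hz2 : σ * C = 0 := by rw [hac, hz', neg_zero]
  have : σ * σ * ρ = σ * ρ * σ := by
    rw [hC, Matrix.mul_sub, sub_eq_zero] at hz2
    simpa only [Matrix.mul_assoc] using hz2
  calc σ * ρ = G * (σ * σ * ρ) := by
        rw [← Matrix.mul_assoc, ← Matrix.mul_assoc, hG, hG1]
    _ = ρ * σ := by rw [this, ← Matrix.mul_assoc, ← Matrix.mul_assoc, hG, hG2]

lemma commute_of_broadcast {ρ ρ' : Matrix n n ℂ} (h : ρ.PosSemidef) (h' : ρ'.PosSemidef)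
    (Λ : Matrix n n ℂ →ₗ[ℂ] Matrix (n × n) (n × n) ℂ) (hΛ : IsQuantumChannel Λ)
    (r : ptraceRight (Λ ρ) = ρ) (l : ptraceLeft (Λ ρ) = ρ)
    (r' : ptraceRight (Λ ρ') = ρ') (l' : ptraceLeft (Λ ρ') = ρ') : ρ * ρ' = ρ' * ρ := by
  obtain ⟨K, hK⟩ := exists_kraus Λ hΛ.1
  have hT := hΛ.2
  obtain ⟨σ, hσd⟩ : ∃ σ, σ = ρ + ρ' := ⟨_, rfl⟩
  have hσ : σ.PosSemidef := hσd ▸ h.add h'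
  have hs : σᴴ = σ := hσ.1
  have hr : ρᴴ = ρ := h.1
  obtain ⟨G, hGh, hGc, hG1, hG2⟩ := exists_pinv hσ
  -- the support of `ρ` lies in that of `σ`
  have hρG : ρ * (G * σ) = ρ := by
    obtain ⟨Q, hQ⟩ : ∃ Q, Q = 1 - σ * G := ⟨_, rfl⟩
    have hQσ : Q * σ = 0 := by rw [hQ, Matrix.sub_mul, Matrix.one_mul, hG1, sub_self]
    have e : (Q * ρ * Qᴴ).trace + (Q * ρ' * Qᴴ).trace = 0 := by
      rw [← trace_add, ← Matrix.add_mul, ← Matrix.mul_add, ← hσd, hQσ, Matrix.zero_mul, trace_zero]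
    have n1 := (h.mul_mul_conjTranspose_same Q).trace_nonneg
    have n2 := (h'.mul_mul_conjTranspose_same Q).trace_nonneg
    have z := mul_eq_zero_of_trace h Q ((add_eq_zero_iff_of_nonneg n1 n2).mp e).1
    have z' := congrArg conjTranspose z
    rw [hQ] at z'
    simp only [conjTranspose_mul, conjTranspose_sub, conjTranspose_one, hGh, hs, hr,
      conjTranspose_zero, Matrix.mul_sub, Matrix.mul_one, sub_eq_zero] at z'
    exact z'.symm
  have hGρ : σ * G * ρ = ρ := by
    have := congrArg conjTranspose hρG
    simpa only [conjTranspose_mul, hGh, hs, hr] using this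
  obtain ⟨A, hAd⟩ : ∃ A, A = ρ * G := ⟨_, rfl⟩
  have hA : A * σ = ρ := by rw [hAd, Matrix.mul_assoc, hρG]
  have hAh : Aᴴ = G * ρ := by rw [hAd, conjTranspose_mul, hGh, hr]
  have hZ : Aᴴ = σ * (G * G * ρ) := by
    rw [hAh, ← Matrix.mul_assoc, ← Matrix.mul_assoc, ← hGc, hG2]
  have rσ : ptraceRight (Λ σ) = σ := by
    rw [hσd, map_add]
    conv_rhs => rw [← r, ← r']
    ext a b
    simp [ptraceRight, Finset.sum_add_distrib]
  have lσ : ptraceLeft (Λ σ) = σ := by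
    rw [hσd, map_add]
    conv_rhs => rw [← l, ← l']
    ext a b
    simp [ptraceLeft, Finset.sum_add_distrib]
  obtain ⟨a1, a2⟩ := intertwine Λ K hK hT hσ (A ⊗ₖ (1 : Matrix n n ℂ)) hA hZ
    (by rw [conjTranspose_kronecker, ← mul_kronecker_mul, conjTranspose_one, Matrix.one_mul,
      trace_ptraceRight, rσ])
    (by rw [conjTranspose_kronecker, conjTranspose_one, trace_ptraceRight, r])
    (by rw [conjTranspose_kronecker, ← mul_kronecker_mul, conjTranspose_one, Matrix.one_mul,
      trace_ptraceRight, rσ])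
  obtain ⟨b1, b2⟩ := intertwine Λ K hK hT hσ ((1 : Matrix n n ℂ) ⊗ₖ A) hA hZ
    (by rw [conjTranspose_kronecker, ← mul_kronecker_mul, conjTranspose_one, Matrix.one_mul,
      trace_ptraceLeft, lσ])
    (by rw [conjTranspose_kronecker, conjTranspose_one, trace_ptraceLeft, l])
    (by rw [conjTranspose_kronecker, ← mul_kronecker_mul, conjTranspose_one, Matrix.one_mul,
      trace_ptraceLeft, lσ])
  set B1 := A ⊗ₖ (1 : Matrix n n ℂ) with hB1
  set B2 := (1 : Matrix n n ℂ) ⊗ₖ A with hB2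
  have hcomm : B1 * B2ᴴ = B2ᴴ * B1 := by
    rw [hB1, hB2, conjTranspose_kronecker, conjTranspose_one, ← mul_kronecker_mul,
      ← mul_kronecker_mul]
    simp only [Matrix.one_mul, Matrix.mul_one]
  have c1 : ∀ k, B1 * B2ᴴ * K k * σ = K k * (A * Aᴴ * σ) := by
    intro k
    calc _ = B1 * (B2ᴴ * K k * σ) := by simp only [Matrix.mul_assoc]
      _ = B1 * K k * σ * (G * G * ρ * σ) := by rw [b2, hZ]; simp only [Matrix.mul_assoc]
      _ = K k * A * (σ * (G * G * ρ)) * σ := by rw [a1]; simp only [Matrix.mul_assoc]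
      _ = _ := by rw [← hZ]; simp only [Matrix.mul_assoc]
  have c2 : ∀ k, B2ᴴ * B1 * K k * σ = K k * (Aᴴ * A * σ) := by
    intro k
    calc _ = B2ᴴ * (B1 * K k * σ) := by simp only [Matrix.mul_assoc]
      _ = B2ᴴ * (K k * (σ * G * ρ)) := by rw [a1, Matrix.mul_assoc, hA, hGρ]
      _ = B2ᴴ * K k * σ * (G * ρ) := by simp only [Matrix.mul_assoc]
      _ = K k * Aᴴ * (σ * G * ρ) := by rw [b2]; simp only [Matrix.mul_assoc]
      _ = _ := by rw [hGρ, ← hA]; simp only [Matrix.mul_assoc]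
  have hN : A * Aᴴ * σ = Aᴴ * A * σ := by
    rw [← sub_eq_zero]
    apply eq_zero_of_trace
    rw [← hT, hK]
    have : ∀ k, K k * (A * Aᴴ * σ - Aᴴ * A * σ) = 0 := by
      intro k
      rw [Matrix.mul_sub, ← c1, ← c2, hcomm, sub_self]
    simp only [← Matrix.mul_assoc (K _) (A * Aᴴ * σ - Aᴴ * A * σ), this, Matrix.zero_mul,
      Finset.sum_const_zero, trace_zero]
  have fin := commute_of_normal hσ hr hA hN hGc hG1 hGρ
  rw [hσd, Matrix.add_mul, Matrix.mul_add] at fin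
  exact (add_left_cancel fin).symm

end Helpers3

/-- **No-broadcasting theorem.** Two density matrices `ρ` and `ρ'` can be broadcast by
one and the same quantum channel (both marginals of the output equal the input, for both
states) if and only if they commute. -/
theorem no_broadcasting {n : Type*} [Fintype n] [DecidableEq n]
    (ρ ρ' : Matrix n n ℂ) (hρ : IsDensityMatrix ρ) (hρ' : IsDensityMatrix ρ') :
    (∃ Λ : Matrix n n ℂ →ₗ[ℂ] Matrix (n × n) (n × n) ℂ, IsQuantumChannel Λ ∧
        ptraceRight (Λ ρ) = ρ ∧ ptraceLeft (Λ ρ) = ρ ∧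
        ptraceRight (Λ ρ') = ρ' ∧ ptraceLeft (Λ ρ') = ρ') ↔
      ρ * ρ' = ρ' * ρ := by
  constructor
  · rintro ⟨Λ, hΛ, r, l, r', l'⟩
    exact commute_of_broadcast hρ.1 hρ'.1 Λ hΛ r l r' l'
  · exact broadcast_of_commute hρ.1.1 hρ'.1.1
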